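/- Let M_a ⊆ F_a × F × E_a × E and M_b ⊆ F_b × F × E_b × E be maximal cyclically monotone relations generated by proper lower semicontinuous convex functions φ_a : F_a × F → (−∞,+∞] and φ_b : F_b × F → (−∞,+∞], i.e. (f_a,f,e_a,e) ∈ M_a iff (e_a,e) ∈ ∂φ_a(f_a,f), and similarly for M_b. Define C_f = Π(dom φ_a, F) × Π(dom φ_b, F) and C_e = {(e₁,e₂) : there exists f with (f,e₁) ∈ Π(M_a, F × E) and (−f, e₂) ∈ Π(M_b, F × E)}. Suppose there exist f̄ ∈ F and ē ∈ E with (f̄, −f̄) ∈ rint C_f and (ē, ē) ∈ rint C_e. Then the composition M_a ⇄ M_b ⊆ F_a × F_b × E_a × E_b is maximal cyclically monotone, and it is generated by the function θ* : F_a × F_b → (−∞,+∞], where θ(e_a,e_b) := φ*(e_a, 0, e_b), φ(f_a, f, f_b) := φ_a(f_a, f) + φ_b(f_b, −f), and * denotes convex conjugation. -/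

import Mathlib

/-- The duality pairing (standard inner product) between an effort vector `e`
and a flow vector `f` in `ℝ^n`. -/
noncomputable def dot {n : ℕ} (e f : Fin n → ℝ) : ℝ := ∑ i, e i * f i

/-- Pairing on a product of two spaces `ℝ^{n₁} × ℝ^{n₂}`. -/
noncomputable def dot2 {n1 n2 : ℕ} (e f : (Fin n1 → ℝ) × (Fin n2 → ℝ)) : ℝ :=
  dot e.1 f.1 + dot e.2 f.2

/-- Pairing on a product of three spaces. -/
noncomputable def dot3 {n1 n2 n3 : ℕ}
    (e f : (Fin n1 → ℝ) × (Fin n2 → ℝ) × (Fin n3 → ℝ)) : ℝ :=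
  dot e.1 f.1 + dot e.2.1 f.2.1 + dot e.2.2 f.2.2

/-- The subdifferential of an extended-real-valued function `φ` at `f`, with
respect to a pairing `p`: the set of `e` with
`φ(f') ≥ φ(f) + ⟨e, f' − f⟩` for all `f'` (empty where `φ f = +∞`). -/
def subdiff {α : Type*} [AddCommGroup α] (p : α → α → ℝ) (φ : α → EReal) (f : α) :
    Set α :=
  {e | φ f ≠ ⊤ ∧ ∀ f', φ f + ((p e (f' - f) : ℝ) : EReal) ≤ φ f'}

/-- The convex conjugate `φ*(e) = sup_f (⟨e,f⟩ − φ(f))` w.r.t. a pairing `p`. -/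
noncomputable def fconj {α : Type*} (p : α → α → ℝ) (φ : α → EReal) (e : α) : EReal :=
  ⨆ f, ((p e f : ℝ) : EReal) - φ f

/-- Proper, lower semicontinuous, convex extended-real-valued function. -/
def ProperLscConvex {α : Type*} [AddCommGroup α] [Module ℝ α] [TopologicalSpace α]
    (φ : α → EReal) : Prop :=
  (∃ x, φ x ≠ ⊤) ∧ (∀ x, φ x ≠ ⊥) ∧ LowerSemicontinuous φ ∧
    ∀ x y : α, ∀ t : ℝ, 0 ≤ t → t ≤ 1 →
      φ (t • x + (1 - t) • y) ≤ (t : EReal) * φ x + ((1 - t : ℝ) : EReal) * φ y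

/-- Cyclically monotone relation, elements ordered as
(flow₁, flow₂, effort₁, effort₂). -/
def CycMono4 {n1 n2 : ℕ}
    (M : Set ((Fin n1 → ℝ) × (Fin n2 → ℝ) × (Fin n1 → ℝ) × (Fin n2 → ℝ))) : Prop :=
  ∀ m : ℕ, 1 ≤ m → ∀ (f1 : ℕ → Fin n1 → ℝ) (f2 : ℕ → Fin n2 → ℝ)
    (e1 : ℕ → Fin n1 → ℝ) (e2 : ℕ → Fin n2 → ℝ),
    (∀ i ≤ m, (f1 i, f2 i, e1 i, e2 i) ∈ M) →
    f1 (m + 1) = f1 0 → f2 (m + 1) = f2 0 →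
    0 ≤ ∑ i ∈ Finset.range (m + 1),
        (dot (e1 i) (f1 i - f1 (i + 1)) + dot (e2 i) (f2 i - f2 (i + 1)))

/-- Maximal cyclically monotone relation. -/
def MaxCycMono4 {n1 n2 : ℕ}
    (M : Set ((Fin n1 → ℝ) × (Fin n2 → ℝ) × (Fin n1 → ℝ) × (Fin n2 → ℝ))) : Prop :=
  CycMono4 M ∧ ∀ M', CycMono4 M' → M ⊆ M' → M' = M

/-- The composition `M_a ⇄ M_b` through the shared port. -/
def RelComp {na nb n : ℕ}
    (Ma : Set ((Fin na → ℝ) × (Fin n → ℝ) × (Fin na → ℝ) × (Fin n → ℝ)))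
    (Mb : Set ((Fin nb → ℝ) × (Fin n → ℝ) × (Fin nb → ℝ) × (Fin n → ℝ))) :
    Set ((Fin na → ℝ) × (Fin nb → ℝ) × (Fin na → ℝ) × (Fin nb → ℝ)) :=
  {p | ∃ f e, (p.1, f, p.2.2.1, e) ∈ Ma ∧ (p.2.1, -f, p.2.2.2, e) ∈ Mb}

/-- Relative interior `rint S := rint (cl S)`. -/
noncomputable def rint {V : Type*} [AddCommGroup V] [Module ℝ V] [TopologicalSpace V]
    (S : Set V) : Set V :=
  intrinsicInterior ℝ (closure S)

/-- `φ(f_a, f, f_b) = φ_a(f_a, f) + φ_b(f_b, −f)`. -/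
noncomputable def phiSum {na n nb : ℕ}
    (φa : (Fin na → ℝ) × (Fin n → ℝ) → EReal)
    (φb : (Fin nb → ℝ) × (Fin n → ℝ) → EReal) :
    (Fin na → ℝ) × (Fin n → ℝ) × (Fin nb → ℝ) → EReal :=
  fun q => φa (q.1, q.2.1) + φb (q.2.2, -q.2.1)

/-- `θ(e_a, e_b) = φ*(e_a, 0, e_b)`. -/
noncomputable def theta {na n nb : ℕ}
    (φa : (Fin na → ℝ) × (Fin n → ℝ) → EReal)
    (φb : (Fin nb → ℝ) × (Fin n → ℝ) → EReal) :
    (Fin na → ℝ) × (Fin nb → ℝ) → EReal :=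
  fun p => fconj dot3 (phiSum φa φb) (p.1, 0, p.2)

structure GoodPair {α : Type*} [NormedAddCommGroup α] [NormedSpace ℝ α] (p : α → α → ℝ) : Prop where
  add_left : ∀ x y z, p (x + y) z = p x z + p y z
  smul_left : ∀ (t : ℝ) x z, p (t • x) z = t * p x z
  symm : ∀ x y, p x y = p y x
  cont : Continuous fun q : α × α => p q.1 q.2
  coer : ∀ x, ‖x‖ ^ 2 ≤ p x x

namespace GoodPair
variable {α : Type*} [NormedAddCommGroup α] [NormedSpace ℝ α] {p : α → α → ℝ}

theorem add_right (hp : GoodPair p) (x y z : α) : p x (y + z) = p x y + p x z := by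
  rw [hp.symm, hp.add_left, hp.symm y, hp.symm z]

theorem smul_right (hp : GoodPair p) (t : ℝ) (x y : α) : p x (t • y) = t * p x y := by
  rw [hp.symm, hp.smul_left, hp.symm y]

theorem sub_left (hp : GoodPair p) (x y z : α) : p (x - y) z = p x z - p y z := by
  have := hp.add_left x ((-1 : ℝ) • y) z
  rw [hp.smul_left] at this
  rw [sub_eq_add_neg, ← neg_one_smul ℝ y, this]; ring

theorem sub_right (hp : GoodPair p) (x y z : α) : p x (y - z) = p x y - p x z := by
  rw [hp.symm, hp.sub_left, hp.symm y, hp.symm z]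

end GoodPair

def Cvx {α : Type*} [AddCommGroup α] [Module ℝ α] (ψ : α → EReal) : Prop :=
  ∀ x y (a b t : ℝ), ψ x ≤ (a : EReal) → ψ y ≤ (b : EReal) → 0 ≤ t → t ≤ 1 →
    ψ (t • x + (1 - t) • y) ≤ ((t * a + (1 - t) * b : ℝ) : EReal)

theorem ex_real {x : EReal} (h1 : x ≠ ⊤) (h2 : x ≠ ⊥) : ∃ r : ℝ, x = r :=
  ⟨x.toReal, (EReal.coe_toReal h1 h2).symm⟩

theorem sub_le_iff' (a r : ℝ) (x : EReal) :
    (a : EReal) - x ≤ (r : EReal) ↔ ((a - r : ℝ) : EReal) ≤ x := by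
  induction x with
  | bot => simp [← EReal.coe_sub]
  | top => simp
  | coe x =>
    rw [← EReal.coe_sub, EReal.coe_le_coe_iff, EReal.coe_le_coe_iff]
    constructor <;> intro h <;> linarith

theorem fconj_le_iff {α : Type*} (p : α → α → ℝ) (φ : α → EReal) (e : α) (r : ℝ) :
    fconj p φ e ≤ (r : EReal) ↔ ∀ f, ((p e f - r : ℝ) : EReal) ≤ φ f := by
  unfold fconj
  rw [iSup_le_iff]
  exact forall_congr' fun f => sub_le_iff' _ _ _

theorem le_fconj {α : Type*} (p : α → α → ℝ) (φ : α → EReal) (e x : α) (r : ℝ)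
    (h : φ x = r) : ((p e x - r : ℝ) : EReal) ≤ fconj p φ e := by
  unfold fconj
  refine le_trans ?_ (le_iSup _ x)
  rw [h, EReal.coe_sub]

section
variable {α : Type*} [NormedAddCommGroup α] [NormedSpace ℝ α] {p : α → α → ℝ}

theorem prox [FiniteDimensional ℝ α] (hp : GoodPair p) (ψ : α → EReal) (hl : LowerSemicontinuous ψ)
    (hc : Cvx ψ) (x0 : α) (r0 : ℝ) (h0 : ψ x0 = r0) (c : α) (d : ℝ)
    (hm : ∀ x, ((p c x + d : ℝ) : EReal) ≤ ψ x) (l : ℝ) (hlpos : 0 < l) (z : α) :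
    ∃ y, z - l • y ∈ subdiff p ψ y := by
  have hnb : ∀ x, ψ x ≠ ⊥ := fun x hx => by
    have := hm x
    rw [hx] at this
    exact EReal.coe_ne_bot _ (le_bot_iff.1 this)
  let q : α → ℝ := fun x => l / 2 * p x x - p z x
  have hq : Continuous q := by
    have h1 : Continuous fun x => p x x := hp.cont.comp (continuous_id.prodMk continuous_id)
    have h2 : Continuous fun x => p z x := hp.cont.comp (continuous_const.prodMk continuous_id)
    exact (h1.const_mul _).sub h2
  let F : α → EReal := fun x => ψ x + (q x : EReal)
  have hF : LowerSemicontinuous F := by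
    refine hl.add' (continuous_coe_real_ereal.comp hq).lowerSemicontinuous ?_
    intro x
    exact EReal.continuousAt_add (Or.inr (EReal.coe_ne_bot _)) (Or.inr (EReal.coe_ne_top _))
  -- coercivity
  obtain ⟨K, hK⟩ : ∃ K : ℝ, ∀ x, F x ≤ F x0 → ‖x‖ ^ 2 ≤ K := by
    let w := z - c
    refine ⟨4 / l * (r0 + q x0 - d + p w w / l), fun x hx => ?_⟩
    have h1 : ((p c x + d + q x : ℝ) : EReal) ≤ ((r0 + q x0 : ℝ) : EReal) := by
      refine le_trans ?_ (hx.trans ?_)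
      · rw [EReal.coe_add]; exact add_le_add (hm x) le_rfl
      · simp only [F]; rw [h0, ← EReal.coe_add]
    rw [EReal.coe_le_coe_iff] at h1
    have h2 := (sq_nonneg _).trans (hp.coer (x - (2 / l) • w))
    have h3 : p (x - (2 / l) • w) (x - (2 / l) • w) =
        p x x - 4 / l * p w x + 4 / l ^ 2 * p w w := by
      rw [hp.sub_left, hp.sub_right, hp.sub_right, hp.smul_left, hp.smul_left, hp.smul_right,
        hp.smul_right, hp.symm x w]
      field_simp; ring
    rw [h3] at h2
    have h4 : p w x = p z x - p c x := hp.sub_left _ _ _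
    have h5 := hp.coer x
    have h6 : p w x ≤ l / 4 * p x x + p w w / l := by
      have : 0 ≤ l / 4 * (p x x - 4 / l * p w x + 4 / l ^ 2 * p w w) := by positivity
      have h7 : l / 4 * (p x x - 4 / l * p w x + 4 / l ^ 2 * p w w)
        = l / 4 * p x x - p w x + p w w / l := by field_simp
      linarith
    have h8 : l / 4 * p x x ≤ r0 + q x0 - d + p w w / l := by
      have : q x = l / 2 * p x x - p z x := rfl
      linarith
    calc ‖x‖ ^ 2 ≤ p x x := h5
      _ = 4 / l * (l / 4 * p x x) := by field_simp
      _ ≤ _ := mul_le_mul_of_nonneg_left h8 (by positivity)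
  have hprop : ProperSpace α := FiniteDimensional.proper ℝ α
  obtain ⟨y, hy, hmin⟩ : ∃ y, F y ≤ F x0 ∧ ∀ x, F y ≤ F x := by
    let R := max ‖x0‖ (|K| + 1)
    have hx0 : x0 ∈ Metric.closedBall (0 : α) R := by simp [R]
    obtain ⟨y, hy, hmin⟩ := LowerSemicontinuousOn.exists_isMinOn ⟨x0, hx0⟩
      (isCompact_closedBall (0 : α) R) (hF.lowerSemicontinuousOn _)
    have hy0 : F y ≤ F x0 := hmin hx0
    refine ⟨y, hy0, fun x => ?_⟩
    by_cases hx : x ∈ Metric.closedBall (0 : α) R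
    · exact hmin hx
    · by_contra hlt
      push Not at hlt
      have h1 := hK x (hlt.le.trans hy0)
      simp only [Metric.mem_closedBall, dist_zero_right, not_le] at hx
      have h2 : |K| + 1 < ‖x‖ := lt_of_le_of_lt (le_max_right _ _) hx
      have := le_abs_self K
      have := abs_nonneg K
      nlinarith
  have hyt : ψ y ≠ ⊤ := by
    intro h
    have h1 : F y = ⊤ := by simp only [F]; rw [h]; exact EReal.top_add_coe _
    rw [h1] at hy
    simp only [F] at hy
    rw [h0, ← EReal.coe_add] at hy
    exact EReal.coe_ne_top _ (top_le_iff.1 hy)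
  obtain ⟨a, ha⟩ := ex_real hyt (hnb y)
  refine ⟨y, hyt, fun x => ?_⟩
  by_cases hxt : ψ x = ⊤
  · rw [hxt]; exact le_top
  obtain ⟨b, hb⟩ := ex_real hxt (hnb x)
  rw [ha, hb, ← EReal.coe_add, EReal.coe_le_coe_iff]
  have key : ∀ t : ℝ, 0 < t → t ≤ 1 →
      0 ≤ (b - a - p (z - l • y) (x - y)) + t * (l / 2 * p (x - y) (x - y)) := by
    intro t ht ht1
    have h1 := hmin (t • x + (1 - t) • y)
    have h2 := hc x y b a t hb.le ha.le ht.le ht1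
    have h3 : ((a + q y : ℝ) : EReal) ≤
        ((t * b + (1 - t) * a + q (t • x + (1 - t) • y) : ℝ) : EReal) := by
      have h4 : ((a + q y : ℝ) : EReal) = F y := by simp only [F]; rw [ha, EReal.coe_add]
      rw [h4, EReal.coe_add]
      exact h1.trans (add_le_add h2 le_rfl)
    rw [EReal.coe_le_coe_iff] at h3
    have h5 : q (t • x + (1 - t) • y) = q y + t * (l * p y (x - y) - p z (x - y))
        + t ^ 2 * (l / 2 * p (x - y) (x - y)) := by
      simp only [q]
      simp only [hp.sub_left, hp.sub_right, hp.smul_left, hp.smul_right, hp.add_left, hp.add_right,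
        hp.symm x y]
      ring
    rw [h5] at h3
    have h6 : p (z - l • y) (x - y) = p z (x - y) - l * p y (x - y) := by
      rw [hp.sub_left, hp.smul_left]
    rw [h6]
    have h7 : 0 ≤ t * ((b - a - (p z (x - y) - l * p y (x - y)))
      + t * (l / 2 * p (x - y) (x - y))) := by nlinarith
    exact nonneg_of_mul_nonneg_right h7 ht
  have hlim : Filter.Tendsto (fun t : ℝ => (b - a - p (z - l • y) (x - y))
      + t * (l / 2 * p (x - y) (x - y))) (nhdsWithin 0 (Set.Ioi 0))
      (nhds ((b - a - p (z - l • y) (x - y)) + 0 * (l / 2 * p (x - y) (x - y)))) := by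
    apply Filter.Tendsto.mono_left _ nhdsWithin_le_nhds
    apply Continuous.tendsto (f := fun t : ℝ => (b - a - p (z - l • y) (x - y))
      + t * (l / 2 * p (x - y) (x - y)))
    fun_prop
  have hge := ge_of_tendsto hlim (b := 0) (by
    have : Set.Ioc (0:ℝ) 1 ∈ nhdsWithin (0:ℝ) (Set.Ioi 0) := Ioc_mem_nhdsGT (by norm_num)
    filter_upwards [this] with t ht using key t ht.1 ht.2)
  linarith

/-- two-point monotonicity of a subdifferential -/
theorem subdiff_mono (hp : GoodPair p) (ψ : α → EReal) (hnb : ∀ x, ψ x ≠ ⊥) (x y u v : α)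
    (hu : u ∈ subdiff p ψ x) (hv : v ∈ subdiff p ψ y) : 0 ≤ p (u - v) (x - y) := by
  obtain ⟨a, ha⟩ := ex_real hu.1 (hnb x)
  obtain ⟨b, hb⟩ := ex_real hv.1 (hnb y)
  have h1 := hu.2 y
  have h2 := hv.2 x
  rw [ha, hb, ← EReal.coe_add, EReal.coe_le_coe_iff] at h1 h2
  simp only [hp.sub_left, hp.sub_right] at *
  linarith

theorem minty_eq (hp : GoodPair p) (x y u v : α) (h : y + v = x + u) (hm : 0 ≤ p (u - v) (x - y)) :
    y = x ∧ v = u := by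
  have h1 : u - v = (-1 : ℝ) • (x - y) := by
    rw [neg_one_smul]
    have : v = x + u - y := by rw [← h]; abel
    rw [this]; abel
  rw [h1, hp.smul_left] at hm
  have h2 := hp.coer (x - y)
  have h3 : ‖x - y‖ ^ 2 = 0 := le_antisymm (by linarith) (sq_nonneg _)
  have h4 : x - y = 0 := by simpa using h3
  have h5 : x = y := sub_eq_zero.1 h4
  subst h5
  exact ⟨rfl, by simpa using h⟩

/-- Fenchel equality. -/
theorem fconj_eq (hp : GoodPair p) (φ : α → EReal) (x e : α) (r : ℝ) (hr : φ x = r)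
    (h : e ∈ subdiff p φ x) : fconj p φ e = ((p e x - r : ℝ) : EReal) := by
  apply le_antisymm _ (le_fconj p φ e x r hr)
  rw [fconj_le_iff]
  intro f
  have := h.2 f
  rw [hr, ← EReal.coe_add] at this
  convert this using 2
  rw [hp.sub_right]; ring

theorem subdiff_fconj (hp : GoodPair p) (φ : α → EReal) (hnb : ∀ x, φ x ≠ ⊥) (x e : α)
    (h : e ∈ subdiff p φ x) : x ∈ subdiff p (fconj p φ) e := by
  obtain ⟨r, hr⟩ := ex_real h.1 (hnb x)
  have h1 := fconj_eq hp φ x e r hr h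
  refine ⟨by rw [h1]; exact EReal.coe_ne_top _, fun e' => ?_⟩
  rw [h1, ← EReal.coe_add]
  convert le_fconj p φ e' x r hr using 2
  rw [hp.sub_right, hp.symm x, hp.symm x]; ring

theorem fconj_ne_bot (φ : α → EReal) (x0 : α) (r0 : ℝ) (h0 : φ x0 = r0) (e : α) :
    fconj p φ e ≠ ⊥ := by
  intro h
  have := le_fconj p φ e x0 r0 h0
  rw [h] at this
  exact EReal.coe_ne_bot _ (le_bot_iff.1 this)

theorem subdiff_of_fconj [FiniteDimensional ℝ α] (hp : GoodPair p) (φ : α → EReal)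
    (hl : LowerSemicontinuous φ)
    (hc : Cvx φ) (x0 : α) (r0 : ℝ) (h0 : φ x0 = r0) (c : α) (d : ℝ)
    (hm : ∀ x, ((p c x + d : ℝ) : EReal) ≤ φ x) (x e : α)
    (h : x ∈ subdiff p (fconj p φ) e) : e ∈ subdiff p φ x := by
  have hnb : ∀ x, φ x ≠ ⊥ := fun x hx => by
    have := hm x
    rw [hx] at this
    exact EReal.coe_ne_bot _ (le_bot_iff.1 this)
  obtain ⟨y, hy⟩ := prox hp φ hl hc x0 r0 h0 c d hm 1 one_pos (x + e)
  rw [one_smul] at hy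
  have h1 := subdiff_fconj hp φ hnb _ _ hy
  have h2 := subdiff_mono hp _ (fconj_ne_bot φ x0 r0 h0) _ _ _ _ h h1
  rw [hp.symm] at h2
  obtain ⟨h3, h4⟩ := minty_eq hp x y e (x + e - y) (by abel) h2
  rw [h4, h3] at hy
  exact hy

theorem fconj_lsc (hp : GoodPair p) (φ : α → EReal) : LowerSemicontinuous (fconj p φ) := by
  unfold fconj
  apply lowerSemicontinuous_iSup
  intro f
  have h2 : Continuous fun e => p e f := hp.cont.comp (continuous_id.prodMk continuous_const)
  simp only [sub_eq_add_neg]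
  refine (continuous_coe_real_ereal.comp h2).lowerSemicontinuous.add'
    lowerSemicontinuous_const ?_
  intro x
  exact EReal.continuousAt_add (Or.inl (EReal.coe_ne_top _)) (Or.inl (EReal.coe_ne_bot _))

theorem fconj_cvx (hp : GoodPair p) (φ : α → EReal) : Cvx (fconj p φ) := by
  intro x y a b t hx hy ht0 ht1
  rw [fconj_le_iff] at *
  intro f
  have h1 := hx f
  have h2 := hy f
  by_cases hf : φ f = ⊤
  · rw [hf]; exact le_top
  obtain ⟨r, hr⟩ := ex_real hf (fun hb => by
    rw [hb] at h1; exact EReal.coe_ne_bot _ (le_bot_iff.1 h1))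
  rw [hr, EReal.coe_le_coe_iff] at h1 h2 ⊢
  rw [hp.add_left, hp.smul_left, hp.smul_left]
  nlinarith

/-- density of the range of the subdifferential in the domain of the conjugate -/
theorem range_dense [FiniteDimensional ℝ α] (hp : GoodPair p) (φ : α → EReal)
    (hl : LowerSemicontinuous φ)
    (hc : Cvx φ) (x0 : α) (r0 : ℝ) (h0 : φ x0 = r0) (c : α) (d : ℝ)
    (hm : ∀ x, ((p c x + d : ℝ) : EReal) ≤ φ x) (e : α) (he : fconj p φ e ≠ ⊤) :
    e ∈ closure {u | ∃ x, u ∈ subdiff p φ x} := by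
  have hnb : ∀ x, φ x ≠ ⊥ := fun x hx => by
    have := hm x
    rw [hx] at this
    exact EReal.coe_ne_bot _ (le_bot_iff.1 this)
  obtain ⟨M, hM⟩ := ex_real he (fconj_ne_bot φ x0 r0 h0 e)
  have hM' := (fconj_le_iff p φ e M).1 hM.le
  rw [Metric.mem_closure_iff]
  intro ε hε
  let K := r0 - p e x0 + M
  have hx0 : 0 ≤ p x0 x0 := (sq_nonneg _).trans (hp.coer _)
  obtain ⟨l, hl0, hl1⟩ : ∃ l : ℝ, 0 < l ∧ l * (2 * K + l * p x0 x0) < ε ^ 2 := by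
    have hlim : Filter.Tendsto (fun l : ℝ => l * (2 * K + l * p x0 x0)) (nhdsWithin 0 (Set.Ioi 0))
        (nhds (0 * (2 * K + 0 * p x0 x0))) := by
      apply Filter.Tendsto.mono_left _ nhdsWithin_le_nhds
      apply Continuous.tendsto (f := fun l : ℝ => l * (2 * K + l * p x0 x0))
      fun_prop
    have := hlim.eventually_lt_const (u := ε ^ 2) (by rw [zero_mul]; positivity)
    obtain ⟨l, h1, h2⟩ := (this.and
      (self_mem_nhdsWithin : Set.Ioi (0:ℝ) ∈ nhdsWithin 0 (Set.Ioi 0))).exists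
    exact ⟨l, h2, h1⟩
  obtain ⟨x, hx⟩ := prox hp φ hl hc x0 r0 h0 c d hm l hl0 e
  refine ⟨_, ⟨x, hx⟩, ?_⟩
  rw [dist_eq_norm, sub_sub_cancel]
  obtain ⟨r, hr⟩ := ex_real hx.1 (hnb x)
  have h1 := hx.2 x0
  have h2 := hM' x
  rw [hr, EReal.coe_le_coe_iff] at h2
  rw [hr, h0, ← EReal.coe_add, EReal.coe_le_coe_iff] at h1
  simp only [hp.sub_left, hp.sub_right, hp.smul_left] at h1
  have h3 := (sq_nonneg _).trans (hp.coer (x - x0))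
  simp only [hp.sub_left, hp.sub_right, hp.symm x0 x] at h3
  have h4 : l * p x x - l * p x x0 ≤ K := by simp only [K]; linarith
  have h5 : 0 ≤ l * (p x x - p x x0 - (p x x0 - p x0 x0)) := mul_nonneg hl0.le h3
  have h6 : l * p x x ≤ 2 * K + l * p x0 x0 := by nlinarith
  have h7 : ‖l • x‖ ^ 2 < ε ^ 2 := by
    refine lt_of_le_of_lt (hp.coer (l • x)) ?_
    rw [hp.smul_left, hp.smul_right]
    exact lt_of_le_of_lt (mul_le_mul_of_nonneg_left h6 hl0.le) hl1
  exact lt_of_pow_lt_pow_left₀ 2 hε.le h7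

end


theorem aux_K0 {E : Type*} [AddCommGroup E] [Module ℝ E] (S : Set (E × ℝ)) (hS : Convex ℝ S)
    (h0 : ∀ r, ((0 : E), r) ∈ S → 0 ≤ r)
    (hd : ∀ y : E, ∃ t : ℝ, 0 < t ∧ ∃ r, (t • y, r) ∈ S) :
    ∃ g : E →ₗ[ℝ] ℝ, ∀ y r, (y, r) ∈ S → g y ≤ r := by
  let s : PointedCone ℝ (E × ℝ) :=
    { carrier := {p | ∃ t : ℝ, 0 ≤ t ∧ ∃ q ∈ S, p = t • q}
      add_mem' := by
        rintro _ _ ⟨t, ht, q, hq, rfl⟩ ⟨t', ht', q', hq', rfl⟩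
        rcases (add_nonneg ht ht').eq_or_lt with h | h
        · have h1 : t = 0 := by linarith
          have h2 : t' = 0 := by linarith
          exact ⟨0, le_rfl, q, hq, by simp [h1, h2]⟩
        · refine ⟨t + t', h.le, (t / (t + t')) • q + (t' / (t + t')) • q',
            hS hq hq' (by positivity) (by positivity) (by field_simp), ?_⟩
          rw [smul_add, smul_smul, smul_smul, mul_div_cancel₀ _ h.ne', mul_div_cancel₀ _ h.ne']
      zero_mem' := by
        obtain ⟨t, ht, r, hr⟩ := hd 0
        exact ⟨0, le_rfl, _, hr, by simp⟩
      smul_mem' := by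
        rintro c _ ⟨t, ht, q, hq, rfl⟩
        exact ⟨c * t, mul_nonneg c.2 ht, q, hq, by rw [mul_smul]; rfl⟩ }
  have hs : ∀ p, p ∈ s ↔ ∃ t : ℝ, 0 ≤ t ∧ ∃ q ∈ S, p = t • q := fun p => Iff.rfl
  let f : (E × ℝ) →ₗ.[ℝ] ℝ :=
    { domain := LinearMap.range (LinearMap.inr ℝ E ℝ)
      toFun := (LinearMap.snd ℝ E ℝ).comp (Submodule.subtype _) }
  have hf : ∀ x : f.domain, f x = (x : E × ℝ).2 := fun x => rfl
  obtain ⟨g, hg1, hg2⟩ := riesz_extension s f (by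
      rintro ⟨x, ⟨r, rfl⟩⟩ hx
      rw [hf]
      obtain ⟨t, ht, ⟨y, ρ⟩, hq, h⟩ := (hs _).1 hx
      simp only [LinearMap.coe_inr, Prod.smul_mk, Prod.mk.injEq] at h ⊢
      rcases ht.eq_or_lt with h' | h'
      · rw [h.2, ← h']; simp
      · have : y = 0 := by
          rcases smul_eq_zero.1 h.1.symm with h3 | h3
          · exact absurd h3 h'.ne'
          · exact h3
        subst this
        rw [h.2]
        exact mul_nonneg ht (h0 _ hq)) (by
      rintro ⟨y, r⟩
      obtain ⟨t, ht, ρ, hρ⟩ := hd y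
      refine ⟨⟨(0, ρ / t - r), ⟨ρ / t - r, rfl⟩⟩, (hs _).2 ⟨t⁻¹, by positivity, _, hρ, ?_⟩⟩
      ext
      · simp [smul_smul, ht.ne']
      · simp; field_simp)
  refine ⟨-(g.comp (LinearMap.inl ℝ E ℝ)), fun y r hy => ?_⟩
  have h1 := hg2 (y, r) ((hs _).2 ⟨1, by norm_num, _, hy, by simp⟩)
  have h2 := hg1 ⟨(0, r), ⟨r, rfl⟩⟩
  rw [hf] at h2
  have h3 : g (y, r) = g (y, 0) + g (0, r) := by rw [← map_add]; simp
  simp at h2 ⊢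
  linarith

theorem aux_K {E : Type*} [AddCommGroup E] [Module ℝ E] (S : Set (E × ℝ)) (hS : Convex ℝ S)
    (h0 : ∀ r, ((0 : E), r) ∈ S → 0 ≤ r)
    (hd : ∀ v ∈ Submodule.span ℝ (Prod.fst '' S), ∃ t : ℝ, 0 < t ∧ t • v ∈ Prod.fst '' S) :
    ∃ g : E →ₗ[ℝ] ℝ, ∀ y r, (y, r) ∈ S → g y ≤ r := by
  set W := Submodule.span ℝ (Prod.fst '' S) with hW
  let L : (W × ℝ) →ₗ[ℝ] E × ℝ := LinearMap.prodMap W.subtype LinearMap.id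
  obtain ⟨g, hg⟩ := aux_K0 (L ⁻¹' S) (hS.linear_preimage L) (by
      intro r hr; exact h0 r (by simpa [L] using hr)) (by
      rintro ⟨y, hy⟩
      obtain ⟨t, ht, ⟨⟨y', r⟩, hr, h⟩⟩ := hd y hy
      refine ⟨t, ht, r, ?_⟩
      simp at h
      subst h
      simpa [L] using hr)
  obtain ⟨g', hg'⟩ := LinearMap.exists_extend g
  refine ⟨g', fun y r hy => ?_⟩
  have hyW : y ∈ W := Submodule.subset_span ⟨_, hy, rfl⟩
  have := hg ⟨y, hyW⟩ r (by simpa [L] using hy)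
  rw [← hg'] at this
  simpa using this

theorem aux_R0 {E : Type*} [NormedAddCommGroup E] [NormedSpace ℝ E]
    (C : Set E) (hC : Convex ℝ C) (hi : (interior C).Nonempty)
    (h : ∀ v : E, ∃ t : ℝ, 0 < t ∧ t • v ∈ closure C) (v : E) :
    ∃ t : ℝ, 0 < t ∧ t • v ∈ C := by
  obtain ⟨p, hp⟩ := hi
  obtain ⟨t, ht, h1⟩ := h (-p)
  have h0 : (0 : E) ∈ interior C := by
    have := hC.combo_interior_closure_mem_interior hp h1 (a := t / (1 + t)) (b := 1 / (1 + t))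
      (by positivity) (by positivity) (by field_simp; ring)
    convert this using 1
    rw [smul_smul, smul_neg, ← sub_eq_add_neg, ← sub_smul]
    ring_nf; simp
  obtain ⟨s, hs, h2⟩ := h v
  refine ⟨s / 2, by positivity, interior_subset ?_⟩
  have := hC.combo_interior_closure_mem_interior h0 h2 (a := 1 / 2) (b := 1 / 2)
      (by positivity) (by positivity) (by norm_num)
  convert this using 1
  rw [smul_smul]; simp; ring_nf

theorem aux_R {E : Type*} [NormedAddCommGroup E] [NormedSpace ℝ E] [FiniteDimensional ℝ E]
    (P D : Set E) (hP : Convex ℝ P) (hDP : D ⊆ P) (hPD : P ⊆ closure D)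
    (h : ∀ v ∈ Submodule.span ℝ D, ∃ t : ℝ, 0 < t ∧ t • v ∈ closure D) :
    ∀ v ∈ Submodule.span ℝ P, ∃ t : ℝ, 0 < t ∧ t • v ∈ P := by
  set W := Submodule.span ℝ P with hW
  have hPW : P ⊆ W := Submodule.subset_span
  have hWD : W ≤ Submodule.span ℝ D := by
    rw [hW, Submodule.span_le]
    refine hPD.trans (closure_minimal Submodule.subset_span ?_)
    exact Submodule.closed_of_finiteDimensional _
  let C : Set W := W.subtype ⁻¹' P
  have hC : Convex ℝ C := hP.linear_preimage W.subtype
  have himg : ((↑) : W → E) '' C = P := by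
    ext x; constructor
    · rintro ⟨y, hy, rfl⟩; exact hy
    · intro hx; exact ⟨⟨x, hPW hx⟩, hx, rfl⟩
  have hcl : ∀ v : W, ∃ t : ℝ, 0 < t ∧ t • v ∈ closure C := by
    intro v
    obtain ⟨t, ht, h1⟩ := h v (hWD v.2)
    refine ⟨t, ht, ?_⟩
    rw [closure_subtype, himg]
    exact closure_mono hDP (by simpa using h1)
  have h0 : (0 : W) ∈ affineSpan ℝ C := by
    obtain ⟨t, ht, h1⟩ := hcl 0
    rw [smul_zero] at h1
    exact closure_minimal (subset_affineSpan ℝ C) (AffineSubspace.closed_of_finiteDimensional _) h1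
  have hspan : Submodule.span ℝ C = ⊤ := by
    apply Submodule.map_injective_of_injective (f := W.subtype) W.injective_subtype
    rw [Submodule.map_span, Submodule.map_top, Submodule.range_subtype]
    change Submodule.span ℝ (((↑) : W → E) '' C) = W
    rw [himg]
  have htop : affineSpan ℝ C = ⊤ := by
    rw [← AffineSubspace.coe_eq_univ_iff]
    ext x
    simp only [Set.mem_univ, iff_true]
    have hle : Submodule.span ℝ C ≤ (affineSpan ℝ C).direction := by
      rw [Submodule.span_le]
      intro c hc
      have := AffineSubspace.vsub_mem_direction (subset_affineSpan ℝ C hc) h0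
      simpa using this
    have hx : x ∈ (affineSpan ℝ C).direction := hle (by rw [hspan]; trivial)
    have := AffineSubspace.vadd_mem_of_mem_direction hx h0
    simpa using this
  have hi := (hC.interior_nonempty_iff_affineSpan_eq_top).2 htop
  intro v hv
  obtain ⟨t, ht, h1⟩ := aux_R0 C hC hi hcl ⟨v, hv⟩
  exact ⟨t, ht, h1⟩

theorem aux_B {Z E : Type*} [NormedAddCommGroup Z] [NormedSpace ℝ Z] 
    [NormedAddCommGroup E] [NormedSpace ℝ E] (S : Set Z) (L : Z →L[ℝ] E) (z : Z)
    (hz : z ∈ intrinsicInterior ℝ (closure S)) (hLz : L z = 0) :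
    ∀ v ∈ Submodule.span ℝ (L '' S), ∃ t : ℝ, 0 < t ∧ t • v ∈ closure (L '' S) := by
  obtain ⟨y, hy, rfl⟩ := mem_intrinsicInterior.1 hz
  intro v hv
  have hle : Submodule.span ℝ (L '' S) ≤ (affineSpan ℝ (closure S)).direction.map (L : Z →ₗ[ℝ] E) := by
    rw [Submodule.span_le]
    rintro _ ⟨s, hs, rfl⟩
    refine ⟨s - y, AffineSubspace.vsub_mem_direction
      (subset_affineSpan ℝ _ (subset_closure hs)) y.2, ?_⟩
    simp [hLz]
  obtain ⟨u, hu, rfl⟩ := hle hv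
  let F : ℝ → affineSpan ℝ (closure S) := fun t => ⟨t • u + y, AffineSubspace.vadd_mem_of_mem_direction
    ((affineSpan ℝ (closure S)).direction.smul_mem t hu) y.2⟩
  have hF : Continuous F := by
    apply Continuous.subtype_mk
    fun_prop
  have hF0 : F 0 = y := by ext; simp [F]
  have hev : ∀ᶠ t in nhds (0 : ℝ), F t ∈ interior (((↑) : affineSpan ℝ (closure S) → Z) ⁻¹' closure S) := by
    apply hF.continuousAt.eventually_mem
    rw [hF0]; exact isOpen_interior.mem_nhds hy
  obtain ⟨t, ht1, ht2⟩ := ((hev.filter_mono nhdsWithin_le_nhds).and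
    (self_mem_nhdsWithin : Set.Ioi (0:ℝ) ∈ nhdsWithin 0 (Set.Ioi 0))).exists
  refine ⟨t, ht2, ?_⟩
  have h0 : F t ∈ ((↑) : affineSpan ℝ (closure S) → Z) ⁻¹' closure S := interior_subset ht1
  have h1 : t • u + y ∈ closure S := h0
  have h2 := image_closure_subset_closure_image L.continuous (Set.mem_image_of_mem L h1)
  simpa [hLz] using h2

theorem dot_add_left {n : ℕ} (x y z : Fin n → ℝ) : dot (x + y) z = dot x z + dot y z := by
  simp [dot, add_mul, Finset.sum_add_distrib]
theorem dot_smul_left {n : ℕ} (t : ℝ) (x z : Fin n → ℝ) : dot (t • x) z = t * dot x z := by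
  simp [dot, Finset.mul_sum, mul_assoc]
theorem dot_symm {n : ℕ} (x z : Fin n → ℝ) : dot x z = dot z x := by
  simp [dot, mul_comm]
theorem dot_neg_left {n : ℕ} (x z : Fin n → ℝ) : dot (-x) z = - dot x z := by
  simp [dot]
theorem dot_sub_left {n : ℕ} (x y z : Fin n → ℝ) : dot (x - y) z = dot x z - dot y z := by
  simp [dot, sub_mul, Finset.sum_sub_distrib]
theorem dot_zero_left {n : ℕ} (z : Fin n → ℝ) : dot 0 z = 0 := by
  simp [dot]
theorem dot_zero_right {n : ℕ} (z : Fin n → ℝ) : dot z 0 = 0 := by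
  simp [dot]
theorem dot_add_right {n : ℕ} (x y z : Fin n → ℝ) : dot x (y + z) = dot x y + dot x z := by
  rw [dot_symm, dot_add_left, dot_symm y, dot_symm z]
theorem dot_smul_right {n : ℕ} (t : ℝ) (x z : Fin n → ℝ) : dot x (t • z) = t * dot x z := by
  rw [dot_symm, dot_smul_left, dot_symm z]
theorem dot_neg_right {n : ℕ} (x z : Fin n → ℝ) : dot x (-z) = - dot x z := by
  simp [dot]
theorem dot_sub_right {n : ℕ} (x y z : Fin n → ℝ) : dot x (y - z) = dot x y - dot x z := by
  rw [dot_symm, dot_sub_left, dot_symm y, dot_symm z]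

theorem dot_self_nonneg {n : ℕ} (x : Fin n → ℝ) : 0 ≤ dot x x :=
  Finset.sum_nonneg fun i _ => mul_self_nonneg _

theorem dot_coer {n : ℕ} (x : Fin n → ℝ) : ‖x‖ ^ 2 ≤ dot x x := by
  have h : ‖x‖ ≤ Real.sqrt (dot x x) := by
    rw [pi_norm_le_iff_of_nonneg (Real.sqrt_nonneg _)]
    intro i
    rw [Real.norm_eq_abs]
    apply Real.abs_le_sqrt
    have := Finset.single_le_sum (f := fun i => x i * x i) (fun i _ => mul_self_nonneg _)
      (Finset.mem_univ i)
    rw [sq]; exact this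
  calc ‖x‖ ^ 2 ≤ (Real.sqrt (dot x x)) ^ 2 := by gcongr
    _ = dot x x := Real.sq_sqrt (dot_self_nonneg x)

theorem dot_cont {n : ℕ} : Continuous fun q : (Fin n → ℝ) × (Fin n → ℝ) => dot q.1 q.2 := by
  unfold dot; fun_prop

theorem goodPair_dot2 {n1 n2 : ℕ} : GoodPair (dot2 (n1 := n1) (n2 := n2)) where
  add_left x y z := by simp only [dot2, Prod.fst_add, Prod.snd_add, dot_add_left]; ring
  smul_left t x z := by simp only [dot2, Prod.smul_fst, Prod.smul_snd, dot_smul_left]; ring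
  symm x y := by simp only [dot2, dot_symm]
  cont := by unfold dot2 dot; fun_prop
  coer x := by
    have h1 := dot_coer x.1
    have h2 := dot_coer x.2
    have h3 := dot_self_nonneg x.1
    have h4 := dot_self_nonneg x.2
    unfold dot2
    rcases max_choice ‖x.1‖ ‖x.2‖ with h | h <;> rw [Prod.norm_def, h] <;> linarith

theorem goodPair_dot3 {n1 n2 n3 : ℕ} : GoodPair (dot3 (n1 := n1) (n2 := n2) (n3 := n3)) where
  add_left x y z := by simp only [dot3, Prod.fst_add, Prod.snd_add, dot_add_left]; ring
  smul_left t x z := by simp only [dot3, Prod.smul_fst, Prod.smul_snd, dot_smul_left]; ring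
  symm x y := by simp only [dot3, dot_symm]
  cont := by unfold dot3 dot; fun_prop
  coer x := by
    have h1 := dot_coer x.1
    have h2 := goodPair_dot2.coer x.2
    have h3 := dot_self_nonneg x.1
    have h4 := (sq_nonneg _).trans h2
    unfold dot3
    unfold dot2 at h2 h4
    rcases max_choice ‖x.1‖ ‖x.2‖ with h | h <;> rw [Prod.norm_def, h] <;> linarith

theorem exists_dot {n : ℕ} (g : (Fin n → ℝ) →ₗ[ℝ] ℝ) : ∃ η : Fin n → ℝ, ∀ y, g y = dot η y := by
  refine ⟨fun i => g fun j => if i = j then 1 else 0, fun y => ?_⟩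
  rw [LinearMap.pi_apply_eq_sum_univ g y]
  simp [dot, mul_comm]

theorem ProperLscConvex.cvx {α : Type*} [AddCommGroup α] [Module ℝ α] [TopologicalSpace α]
    {φ : α → EReal} (h : ProperLscConvex φ) : Cvx φ := by
  intro x y a b t hx hy h0 h1
  have h2 := h.2.2.2 x y t h0 h1
  obtain ⟨r, hr⟩ := ex_real (x := φ x)
    (fun h' => by rw [h'] at hx; exact EReal.coe_ne_top _ (top_le_iff.1 hx)) (h.2.1 x)
  obtain ⟨s, hs⟩ := ex_real (x := φ y)
    (fun h' => by rw [h'] at hy; exact EReal.coe_ne_top _ (top_le_iff.1 hy)) (h.2.1 y)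
  rw [hr, hs, ← EReal.coe_mul, ← EReal.coe_mul, ← EReal.coe_add] at h2
  refine h2.trans ?_
  rw [hr, EReal.coe_le_coe_iff] at hx
  rw [hs, EReal.coe_le_coe_iff] at hy
  rw [EReal.coe_le_coe_iff]
  nlinarith

section
variable {na nb n : ℕ} {φa : (Fin na → ℝ) × (Fin n → ℝ) → EReal}
    {φb : (Fin nb → ℝ) × (Fin n → ℝ) → EReal}

theorem phiSum_lsc (hφa : ProperLscConvex φa) (hφb : ProperLscConvex φb) :
    LowerSemicontinuous (phiSum φa φb) := by
  unfold phiSum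
  refine LowerSemicontinuous.add' (hφa.2.2.1.comp (by fun_prop)) (hφb.2.2.1.comp (by fun_prop)) ?_
  intro x
  exact EReal.continuousAt_add (Or.inr (hφb.2.1 _)) (Or.inl (hφa.2.1 _))

theorem ne_top_of_le {x : EReal} {a : ℝ} (h : x ≤ a) : x ≠ ⊤ := fun h' => by
  rw [h'] at h; exact EReal.coe_ne_top _ (top_le_iff.1 h)

theorem phiSum_real (hφa : ProperLscConvex φa) (hφb : ProperLscConvex φb) (fa f fb)
    (h : phiSum φa φb (fa, f, fb) ≠ ⊤) :
    ∃ a b : ℝ, φa (fa, f) = a ∧ φb (fb, -f) = b ∧ phiSum φa φb (fa, f, fb) = ((a + b : ℝ) : EReal) := by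
  unfold phiSum at *
  simp only at *
  have h1 : φa (fa, f) ≠ ⊤ := fun h' => h (by rw [h']; exact EReal.top_add_of_ne_bot (hφb.2.1 _))
  have h2 : φb (fb, -f) ≠ ⊤ := fun h' => h (by rw [h']; exact EReal.add_top_of_ne_bot (hφa.2.1 _))
  obtain ⟨a, ha⟩ := ex_real h1 (hφa.2.1 _)
  obtain ⟨b, hb⟩ := ex_real h2 (hφb.2.1 _)
  exact ⟨a, b, ha, hb, by rw [ha, hb, EReal.coe_add]⟩

theorem phiSum_cvx (hφa : ProperLscConvex φa) (hφb : ProperLscConvex φb) :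
    Cvx (phiSum φa φb) := by
  rintro ⟨xa, x, xb⟩ ⟨ya, y, yb⟩ a b t hx hy h0 h1
  obtain ⟨a1, a2, e1, e2, e3⟩ := phiSum_real hφa hφb _ _ _ (ne_top_of_le hx)
  obtain ⟨b1, b2, g1, g2, g3⟩ := phiSum_real hφa hφb _ _ _ (ne_top_of_le hy)
  rw [e3, EReal.coe_le_coe_iff] at hx
  rw [g3, EReal.coe_le_coe_iff] at hy
  have k1 := hφa.cvx _ _ a1 b1 t e1.le g1.le h0 h1
  have k2 := hφb.cvx _ _ a2 b2 t e2.le g2.le h0 h1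
  have k3 : phiSum φa φb (t • (xa, x, xb) + (1 - t) • (ya, y, yb)) ≤
      ((t * a1 + (1 - t) * b1 : ℝ) : EReal) + ((t * a2 + (1 - t) * b2 : ℝ) : EReal) := by
    refine le_trans (le_of_eq ?_) (add_le_add k1 k2)
    simp only [phiSum, Prod.smul_mk, Prod.mk_add_mk, neg_add, smul_neg]
  refine k3.trans ?_
  rw [← EReal.coe_add, EReal.coe_le_coe_iff]
  nlinarith

theorem easy_sum (hφa : ProperLscConvex φa) (hφb : ProperLscConvex φb) {fa f fb ea e1 eb e2}
    (ha : (ea, e1) ∈ subdiff dot2 φa (fa, f)) (hb : (eb, e2) ∈ subdiff dot2 φb (fb, -f)) :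
    (ea, e1 - e2, eb) ∈ subdiff dot3 (phiSum φa φb) (fa, f, fb) := by
  obtain ⟨a, hra⟩ := ex_real ha.1 (hφa.2.1 _)
  obtain ⟨b, hrb⟩ := ex_real hb.1 (hφb.2.1 _)
  have h0 : phiSum φa φb (fa, f, fb) = ((a + b : ℝ) : EReal) := by
    simp only [phiSum]; rw [hra, hrb, EReal.coe_add]
  refine ⟨by rw [h0]; exact EReal.coe_ne_top _, ?_⟩
  rintro ⟨fa', f', fb'⟩
  have h1 := ha.2 (fa', f')
  have h2 := hb.2 (fb', -f')
  refine le_trans (le_of_eq ?_) (add_le_add h1 h2)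
  rw [h0, hra, hrb]
  norm_cast
  simp only [dot2, dot3, Prod.mk_sub_mk, dot_sub_left, dot_sub_right, dot_neg_right]
  ring

/-- The sum rule. -/
theorem sum_rule (hφa : ProperLscConvex φa) (hφb : ProperLscConvex φb)
    (hf : ∃ fbar : Fin n → ℝ,
      (fbar, -fbar) ∈ rint
        ({f : Fin n → ℝ | ∃ fa, φa (fa, f) ≠ ⊤} ×ˢ
         {f : Fin n → ℝ | ∃ fb, φb (fb, f) ≠ ⊤}))
    {fa f fb ea g eb} (h : (ea, g, eb) ∈ subdiff dot3 (phiSum φa φb) (fa, f, fb)) :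
    ∃ η, (ea, η) ∈ subdiff dot2 φa (fa, f) ∧ (eb, η - g) ∈ subdiff dot2 φb (fb, -f) := by
  obtain ⟨a, b, ha, hb, hab⟩ := phiSum_real hφa hφb _ _ _ h.1
  obtain ⟨fbar, hfbar⟩ := hf
  let S : Set ((Fin n → ℝ) × ℝ) := {q | ∃ fa' s fb' w, ∃ α β : ℝ, φa (fa', s) ≤ (α : EReal) ∧
    φb (fb', w) ≤ (β : EReal) ∧ q.1 = s + w ∧
    q.2 = α + β - (a + b) - dot ea (fa' - fa) - dot eb (fb' - fb) - dot g (-w - f)}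
  have hS : Convex ℝ S := by
    rintro ⟨y, r⟩ ⟨fa1, s1, fb1, w1, α1, β1, h1, h2, h3, h4⟩ ⟨y', r'⟩
      ⟨fa2, s2, fb2, w2, α2, β2, k1, k2, k3, k4⟩ t t' ht ht' htt
    obtain rfl : t' = 1 - t := by linarith
    have ht1 : t ≤ 1 := by linarith
    refine ⟨_, _, _, _, _, _, hφa.cvx _ _ _ _ t h1 k1 ht ht1, hφb.cvx _ _ _ _ t h2 k2 ht ht1, ?_, ?_⟩
    · simp only at h3 k3
      simp only [Prod.fst_add, Prod.smul_fst]
      rw [h3, k3]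
      simp only [Prod.snd_add, Prod.smul_snd]
      module
    · simp only at h4 k4
      simp only [Prod.snd_add, Prod.smul_snd, Prod.fst_add, Prod.smul_fst]
      rw [h4, k4]
      simp only [dot_sub_right, dot_neg_right, dot_add_right, dot_smul_right, smul_eq_mul]
      ring
  let L : ((Fin n → ℝ) × (Fin n → ℝ)) →L[ℝ] (Fin n → ℝ) :=
    ContinuousLinearMap.fst ℝ _ _ + ContinuousLinearMap.snd ℝ _ _
  have himg : Prod.fst '' S = L '' ({f : Fin n → ℝ | ∃ fa, φa (fa, f) ≠ ⊤} ×ˢ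
         {f : Fin n → ℝ | ∃ fb, φb (fb, f) ≠ ⊤}) := by
    ext y
    constructor
    · rintro ⟨⟨y, r⟩, ⟨fa1, s1, fb1, w1, α1, β1, h1, h2, h3, h4⟩, rfl⟩
      exact ⟨(s1, w1), ⟨⟨fa1, ne_top_of_le h1⟩, ⟨fb1, ne_top_of_le h2⟩⟩, h3.symm⟩
    · rintro ⟨⟨s, w⟩, ⟨⟨fa1, h1⟩, ⟨fb1, h2⟩⟩, rfl⟩
      exact ⟨(s + w, _), ⟨fa1, s, fb1, w, _, _, EReal.le_coe_toReal h1, EReal.le_coe_toReal h2,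
        rfl, rfl⟩, rfl⟩
  have hB := aux_B _ L _ hfbar (by simp [L])
  rw [← himg] at hB
  have hR := aux_R (Prod.fst '' S) (Prod.fst '' S) (hS.linear_image (LinearMap.fst ℝ _ _)) subset_rfl
    subset_closure hB
  obtain ⟨G, hG⟩ := aux_K S hS (by
    rintro r ⟨fa1, s1, fb1, w1, α1, β1, h1, h2, h3, h4⟩
    simp only at h3 h4
    obtain rfl : w1 = -s1 := (neg_eq_of_add_eq_zero_right h3.symm).symm
    have k1 := (h.2 (fa1, s1, fb1)).trans (add_le_add h1 h2)
    rw [hab] at k1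
    norm_cast at k1
    simp only [dot3, Prod.mk_sub_mk] at k1
    rw [neg_neg] at h4
    linarith) hR
  obtain ⟨η, hη⟩ := exists_dot G
  refine ⟨η, ⟨by rw [ha]; exact EReal.coe_ne_top _, ?_⟩, ⟨by rw [hb]; exact EReal.coe_ne_top _, ?_⟩⟩
  · rintro ⟨fa', s⟩
    by_cases ht : φa (fa', s) = ⊤
    · rw [ht]; exact le_top
    obtain ⟨α, hα⟩ := ex_real ht (hφa.2.1 _)
    have k := hG (s + -f) _ ⟨fa', s, fb, -f, α, b, hα.le, hb.le, rfl, rfl⟩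
    rw [hη] at k
    rw [ha, hα, ← EReal.coe_add, EReal.coe_le_coe_iff]
    simp only [dot2, Prod.mk_sub_mk, dot_sub_right, dot_neg_right, dot_add_right] at *
    linarith
  · rintro ⟨fb', w⟩
    by_cases ht : φb (fb', w) = ⊤
    · rw [ht]; exact le_top
    obtain ⟨β, hβ⟩ := ex_real ht (hφb.2.1 _)
    have k := hG (f + w) _ ⟨fa, f, fb', w, a, β, ha.le, hβ.le, rfl, rfl⟩
    rw [hη] at k
    rw [hb, hβ, ← EReal.coe_add, EReal.coe_le_coe_iff]
    simp only [dot2, Prod.mk_sub_mk, dot_sub_right, dot_neg_right, dot_add_right,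
      dot_sub_left] at *
    linarith

end

section
variable {na nb n : ℕ}

theorem relComp_cycMono
    {Ma : Set ((Fin na → ℝ) × (Fin n → ℝ) × (Fin na → ℝ) × (Fin n → ℝ))}
    {Mb : Set ((Fin nb → ℝ) × (Fin n → ℝ) × (Fin nb → ℝ) × (Fin n → ℝ))}
    (hMa : CycMono4 Ma) (hMb : CycMono4 Mb) : CycMono4 (RelComp Ma Mb) := by
  intro m hm f1 f2 e1 e2 h hf1 hf2
  have h' : ∀ i, ∃ f e, i ≤ m → (f1 i, f, e1 i, e) ∈ Ma ∧ (f2 i, -f, e2 i, e) ∈ Mb := by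
    intro i
    by_cases hi : i ≤ m
    · obtain ⟨f, e, h1, h2⟩ := h i hi
      exact ⟨f, e, fun _ => ⟨h1, h2⟩⟩
    · exact ⟨0, 0, fun h => absurd h hi⟩
  choose F E hFE using h'
  let F' : ℕ → Fin n → ℝ := fun i => if i ≤ m then F i else F 0
  have hF' : ∀ i ≤ m, F' i = F i := fun i hi => if_pos hi
  have hFm : F' (m + 1) = F' 0 := by simp [F']
  have ha := hMa m hm f1 F' e1 E (fun i hi => by rw [hF' i hi]; exact (hFE i hi).1) hf1 hFm
  have hb := hMb m hm f2 (fun i => -F' i) e2 E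
    (fun i hi => by simp only [hF' i hi]; exact (hFE i hi).2) hf2 (by simp only [hFm])
  refine (add_nonneg ha hb).trans (le_of_eq ?_)
  rw [← Finset.sum_add_distrib]
  refine Finset.sum_congr rfl fun i _ => ?_
  simp only [dot_sub_right, dot_neg_right]
  ring

variable {φa : (Fin na → ℝ) × (Fin n → ℝ) → EReal}
    {φb : (Fin nb → ℝ) × (Fin n → ℝ) → EReal}

theorem proj_convex (Φ : (Fin na → ℝ) × (Fin n → ℝ) × (Fin nb → ℝ) → EReal) (hc : Cvx Φ) :
    Convex ℝ {y | ∃ ea eb, Φ (ea, y, eb) ≠ ⊤} := by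
  rintro y ⟨a1, b1, h1⟩ y' ⟨a2, b2, h2⟩ t t' ht ht' htt
  obtain rfl : t' = 1 - t := by linarith
  have h := hc (a1, y, b1) (a2, y', b2) _ _ t (EReal.le_coe_toReal h1) (EReal.le_coe_toReal h2)
      ht (by linarith)
  exact ⟨t • a1 + (1 - t) • a2, t • b1 + (1 - t) • b2, ne_top_of_le h⟩

/-- Partial subdifferential rule for the conjugate. -/
theorem partial_rule (Φ : (Fin na → ℝ) × (Fin n → ℝ) × (Fin nb → ℝ) → EReal) (hc : Cvx Φ)
    (hnb : ∀ x, Φ x ≠ ⊥)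
    (hd : ∀ v ∈ Submodule.span ℝ {y | ∃ ea eb, Φ (ea, y, eb) ≠ ⊤}, ∃ t : ℝ, 0 < t ∧
      t • v ∈ {y | ∃ ea eb, Φ (ea, y, eb) ≠ ⊤})
    {fa fb ea eb}
    (h : (fa, fb) ∈ subdiff dot2 (fun p => Φ (p.1, 0, p.2)) (ea, eb)) :
    ∃ η, (fa, η, fb) ∈ subdiff dot3 Φ (ea, 0, eb) := by
  obtain ⟨m, hm⟩ := ex_real h.1 (hnb _)
  simp only at hm
  let S : Set ((Fin n → ℝ) × ℝ) := {q | ∃ ea' eb', ∃ c : ℝ, Φ (ea', q.1, eb') ≤ (c : EReal) ∧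
    q.2 = c - m - dot fa (ea' - ea) - dot fb (eb' - eb)}
  have hS : Convex ℝ S := by
    rintro ⟨y, r⟩ ⟨a1, b1, c1, h1, h2⟩ ⟨y', r'⟩ ⟨a2, b2, c2, k1, k2⟩ t t' ht ht' htt
    obtain rfl : t' = 1 - t := by linarith
    have ht1 : t ≤ 1 := by linarith
    refine ⟨_, _, _, hc _ _ _ _ t h1 k1 ht ht1, ?_⟩
    simp only at h2 k2
    simp only [Prod.snd_add, Prod.smul_snd, Prod.fst_add, Prod.smul_fst]
    rw [h2, k2]
    simp only [dot_sub_right, dot_add_right, dot_smul_right, smul_eq_mul]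
    ring
  have himg : Prod.fst '' S = {y | ∃ ea eb, Φ (ea, y, eb) ≠ ⊤} := by
    ext y
    constructor
    · rintro ⟨⟨y, r⟩, ⟨a1, b1, c1, h1, h2⟩, rfl⟩
      exact ⟨a1, b1, ne_top_of_le h1⟩
    · rintro ⟨a1, b1, h1⟩
      exact ⟨(y, (Φ (a1, y, b1)).toReal - m - dot fa (a1 - ea) - dot fb (b1 - eb)),
        ⟨a1, b1, _, EReal.le_coe_toReal h1, rfl⟩, rfl⟩
  rw [← himg] at hd
  obtain ⟨G, hG⟩ := aux_K S hS (by
    rintro r ⟨a1, b1, c1, h1, h2⟩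
    simp only at h1 h2
    have k := (h.2 (a1, b1)).trans h1
    simp only [hm, ← EReal.coe_add, EReal.coe_le_coe_iff, dot2, Prod.mk_sub_mk] at k
    linarith) hd
  obtain ⟨η, hη⟩ := exists_dot G
  refine ⟨η, h.1, ?_⟩
  rintro ⟨a', y, b'⟩
  by_cases ht : Φ (a', y, b') = ⊤
  · rw [ht]; exact le_top
  obtain ⟨c, hc'⟩ := ex_real ht (hnb _)
  have k := hG y _ ⟨a', b', c, hc'.le, rfl⟩
  rw [hη] at k
  rw [hm, hc', ← EReal.coe_add, EReal.coe_le_coe_iff]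
  simp only [dot3, Prod.mk_sub_mk, sub_zero]
  linarith

end

/-- Composition of maximal cyclically monotone relations, generated by
`φ_a`, `φ_b`, is maximal cyclically monotone with generating function `θ*`,
under the relative-interior conditions. -/
theorem maximalCyclicallyMonotone_relComp {na nb n : ℕ}
    (Ma : Set ((Fin na → ℝ) × (Fin n → ℝ) × (Fin na → ℝ) × (Fin n → ℝ)))
    (Mb : Set ((Fin nb → ℝ) × (Fin n → ℝ) × (Fin nb → ℝ) × (Fin n → ℝ)))
    (hMa : MaxCycMono4 Ma) (hMb : MaxCycMono4 Mb)
    (φa : (Fin na → ℝ) × (Fin n → ℝ) → EReal)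
    (φb : (Fin nb → ℝ) × (Fin n → ℝ) → EReal)
    (hφa : ProperLscConvex φa) (hφb : ProperLscConvex φb)
    (hgena : ∀ fa f ea e, (fa, f, ea, e) ∈ Ma ↔ (ea, e) ∈ subdiff dot2 φa (fa, f))
    (hgenb : ∀ fb f eb e, (fb, f, eb, e) ∈ Mb ↔ (eb, e) ∈ subdiff dot2 φb (fb, f))
    (hf : ∃ fbar : Fin n → ℝ,
      (fbar, -fbar) ∈ rint
        ({f : Fin n → ℝ | ∃ fa, φa (fa, f) ≠ ⊤} ×ˢ
         {f : Fin n → ℝ | ∃ fb, φb (fb, f) ≠ ⊤}))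
    (he : ∃ ebar : Fin n → ℝ,
      (ebar, ebar) ∈ rint
        {p : (Fin n → ℝ) × (Fin n → ℝ) | ∃ f,
          (∃ fa ea, (fa, f, ea, p.1) ∈ Ma) ∧ (∃ fb eb, (fb, -f, eb, p.2) ∈ Mb)}) :
    MaxCycMono4 (RelComp Ma Mb) ∧
      ∀ fa fb ea eb, (fa, fb, ea, eb) ∈ RelComp Ma Mb ↔
        (ea, eb) ∈ subdiff dot2 (fconj dot2 (theta φa φb)) (fa, fb) := by
  have p2 := goodPair_dot2 (n1 := na) (n2 := nb)
  have p3 := goodPair_dot3 (n1 := na) (n2 := n) (n3 := nb)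
  obtain ⟨ebar, hebar⟩ := he
  have hne := closure_nonempty_iff.1 ⟨_, intrinsicInterior_subset hebar⟩
  obtain ⟨⟨q1, q2⟩, f0, ⟨fa0, ea0, ha0⟩, ⟨fb0, eb0, hb0⟩⟩ := hne
  rw [hgena] at ha0
  rw [hgenb] at hb0
  have hs0 := easy_sum hφa hφb ha0 hb0
  obtain ⟨ra, rb, -, -, hr0⟩ := phiSum_real hφa hφb _ _ _ hs0.1
  set r0 : ℝ := ra + rb
  set x0 : (Fin na → ℝ) × (Fin n → ℝ) × (Fin nb → ℝ) := (fa0, f0, fb0) with hx0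
  set c0 : (Fin na → ℝ) × (Fin n → ℝ) × (Fin nb → ℝ) := (ea0, q1 - q2, eb0)
  set φ := phiSum φa φb with hφ
  have hl : LowerSemicontinuous φ := phiSum_lsc hφa hφb
  have hc : Cvx φ := phiSum_cvx hφa hφb
  have hm : ∀ x, ((dot3 c0 x + (r0 - dot3 c0 x0) : ℝ) : EReal) ≤ φ x := by
    intro x
    have := hs0.2 x
    rw [hr0, ← EReal.coe_add] at this
    convert this using 2
    rw [p3.sub_right]; ring
  have hnb : ∀ x, φ x ≠ ⊥ := fun x hx => by
    have := hm x
    rw [hx] at this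
    exact EReal.coe_ne_bot _ (le_bot_iff.1 this)
  -- the domain of the conjugate projected on the shared port
  let C : Set ((Fin n → ℝ) × (Fin n → ℝ)) := {p : (Fin n → ℝ) × (Fin n → ℝ) | ∃ f,
          (∃ fa ea, (fa, f, ea, p.1) ∈ Ma) ∧ (∃ fb eb, (fb, -f, eb, p.2) ∈ Mb)}
  let L : ((Fin n → ℝ) × (Fin n → ℝ)) →L[ℝ] (Fin n → ℝ) :=
    ContinuousLinearMap.fst ℝ _ _ - ContinuousLinearMap.snd ℝ _ _
  let Pr : Set (Fin n → ℝ) := {y | ∃ ea eb, fconj dot3 φ (ea, y, eb) ≠ ⊤}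
  have hB : ∀ v ∈ Submodule.span ℝ (L '' C), ∃ t : ℝ, 0 < t ∧ t • v ∈ closure (L '' C) :=
    aux_B C L _ hebar (by simp [L])
  have hcc : Cvx (fconj dot3 φ) := fconj_cvx p3 φ
  have hPr : Convex ℝ Pr := proj_convex _ hcc
  have hDP : L '' C ⊆ Pr := by
    rintro _ ⟨⟨e1, e2⟩, ⟨f, ⟨fa, ea, ha⟩, ⟨fb, eb, hb⟩⟩, rfl⟩
    rw [hgena] at ha
    rw [hgenb] at hb
    have h1 := subdiff_fconj p3 φ hnb _ _ (easy_sum hφa hφb ha hb)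
    exact ⟨ea, eb, h1.1⟩
  have hPD : Pr ⊆ closure (L '' C) := by
    rintro y ⟨ea, eb, h1⟩
    have h2 := range_dense p3 φ hl hc x0 r0 hr0 c0 _ hm _ h1
    have h3 := image_closure_subset_closure_image
      (f := fun q : (Fin na → ℝ) × (Fin n → ℝ) × (Fin nb → ℝ) => q.2.1) (by fun_prop)
      (Set.mem_image_of_mem _ h2)
    refine closure_mono ?_ h3
    rintro _ ⟨⟨ea, g, eb⟩, ⟨⟨fa, f, fb⟩, hx⟩, rfl⟩
    obtain ⟨η, k1, k2⟩ := sum_rule hφa hφb hf hx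
    refine ⟨(η, η - g), ⟨f, ⟨fa, ea, (hgena _ _ _ _).2 k1⟩, ⟨fb, eb, (hgenb _ _ _ _).2 k2⟩⟩, ?_⟩
    simp [L]
  have hR := aux_R Pr (L '' C) hPr hDP hPD hB
  obtain ⟨ea1, eb1, hθ1⟩ : (0 : Fin n → ℝ) ∈ Pr := by
    obtain ⟨t, -, h⟩ := hR 0 (Submodule.zero_mem _)
    simpa using h
  set θ := theta φa φb with hθ
  have hθdef : θ = fun p : (Fin na → ℝ) × (Fin nb → ℝ) => fconj dot3 φ (p.1, 0, p.2) := rfl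
  have hcnb := fconj_ne_bot (p := dot3) φ x0 r0 hr0
  have hθnb : ∀ p, θ p ≠ ⊥ := fun p => hcnb _
  obtain ⟨s1, hs1⟩ := ex_real hθ1 (hcnb _)
  have hθl : LowerSemicontinuous θ := by
    rw [hθdef]
    have hcont : Continuous fun p : (Fin na → ℝ) × (Fin nb → ℝ) =>
      ((p.1, 0, p.2) : (Fin na → ℝ) × (Fin n → ℝ) × (Fin nb → ℝ)) := by fun_prop
    exact (fconj_lsc p3 φ).comp hcont
  have hθc : Cvx θ := by
    rintro ⟨xa, xb⟩ ⟨ya, yb⟩ a b t hx hy h0 h1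
    have := hcc _ _ a b t hx hy h0 h1
    simpa [hθdef] using this
  have hθm : ∀ p, ((dot2 (fa0, fb0) p + (-r0) : ℝ) : EReal) ≤ θ p := by
    intro p
    refine le_trans (le_of_eq ?_) (le_fconj dot3 φ (p.1, 0, p.2) x0 r0 hr0)
    rw [EReal.coe_eq_coe_iff]
    simp only [dot2, dot3, hx0, dot_zero_left]
    rw [dot_symm p.1, dot_symm p.2]
    ring
  -- Minty surjectivity
  have minty : ∀ z : (Fin na → ℝ) × (Fin nb → ℝ), ∃ fa fb ea eb,
      (fa, fb, ea, eb) ∈ RelComp Ma Mb ∧ (fa, fb) + (ea, eb) = z := by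
    intro z
    obtain ⟨⟨ea, eb⟩, he⟩ := prox p2 θ hθl hθc (ea1, eb1) s1 hs1 (fa0, fb0) _ hθm 1 one_pos z
    rw [one_smul] at he
    obtain ⟨⟨fa, fb⟩, hfz⟩ : ∃ w, z - (ea, eb) = w := ⟨_, rfl⟩
    rw [hfz] at he
    obtain ⟨f, h1⟩ := partial_rule (fconj dot3 φ) hcc hcnb hR he
    have h2 := subdiff_of_fconj p3 φ hl hc x0 r0 hr0 c0 _ hm _ _ h1
    obtain ⟨η, k1, k2⟩ := sum_rule hφa hφb hf h2
    rw [sub_zero] at k2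
    exact ⟨fa, fb, ea, eb, ⟨f, η, (hgena _ _ _ _).2 k1, (hgenb _ _ _ _).2 k2⟩,
      by rw [← hfz]; abel⟩
  have hsub : ∀ fa fb ea eb, (fa, fb, ea, eb) ∈ RelComp Ma Mb →
        (ea, eb) ∈ subdiff dot2 (fconj dot2 θ) (fa, fb) := by
    rintro fa fb ea eb ⟨f, e, ha, hb⟩
    have h1 := easy_sum hφa hφb ((hgena _ _ _ _).1 ha) ((hgenb _ _ _ _).1 hb)
    rw [sub_self] at h1
    have h2 := subdiff_fconj p3 φ hnb _ _ h1
    apply subdiff_fconj p2 θ hθnb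
    refine ⟨h2.1, ?_⟩
    rintro ⟨a', b'⟩
    have h3 := h2.2 (a', 0, b')
    simpa [hθdef, dot2, dot3, dot_zero_right] using h3
  refine ⟨⟨relComp_cycMono hMa.1 hMb.1, ?_⟩, ?_⟩
  · intro M' hM' hsubM
    refine Set.Subset.antisymm ?_ hsubM
    rintro ⟨fa, fb, ea, eb⟩ hx
    obtain ⟨fa', fb', ea', eb', h1, h2⟩ := minty ((fa, fb) + (ea, eb))
    have h3 := hM' 1 le_rfl (fun i => if i = 1 then fa' else fa) (fun i => if i = 1 then fb' else fb)
      (fun i => if i = 1 then ea' else ea) (fun i => if i = 1 then eb' else eb) (by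
        intro i hi
        by_cases h : i = 1
        · simpa [h] using hsubM h1
        · simpa [h] using hx) (by simp) (by simp)
    simp [Finset.sum_range_succ] at h3
    obtain ⟨k1, k2⟩ := minty_eq p2 (fa, fb) (fa', fb') (ea, eb) (ea', eb') h2 (by
      simp only [dot2, Prod.mk_sub_mk, dot_sub_left, dot_sub_right] at *
      linarith)
    simp only [Prod.mk.injEq] at k1 k2
    rw [← k1.1, ← k1.2, ← k2.1, ← k2.2]
    exact h1
  · intro fa fb ea eb
    refine ⟨hsub _ _ _ _, fun h => ?_⟩
    obtain ⟨fa', fb', ea', eb', h1, h2⟩ := minty ((fa, fb) + (ea, eb))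
    have h3 := subdiff_mono p2 _ (fconj_ne_bot θ (ea1, eb1) s1 hs1) _ _ _ _ h (hsub _ _ _ _ h1)
    obtain ⟨k1, k2⟩ := minty_eq p2 (fa, fb) (fa', fb') (ea, eb) (ea', eb') h2 h3
    simp only [Prod.mk.injEq] at k1 k2
    rw [← k1.1, ← k1.2, ← k2.1, ← k2.2]
    exact h1
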